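/- Let (Ω,F,P) be a complete probability space, T > 0 finite, and Γ : Ω × [0,T] ⇒ ℝ^d an F ⊗ B([0,T])-measurable set-valued mapping. Then the mapping ⃗Γ, defined pathwise by ⃗Γ_0(ω) := {0} and ⃗Γ_t(ω) := liminf_{s↑↑t} Γ_s(ω) for t ∈ (0,T], is F ⊗ B([0,T])-measurable, i.e., {(ω,t) | ⃗Γ_t(ω) ∩ O ≠ ∅} ∈ F ⊗ B([0,T]) for every open O ⊆ ℝ^d. -/

import Mathlib

open MeasureTheory Filter Set Topology
open scoped ENNReal Classical

/-- Euclidean space `ℝ^d`. -/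
abbrev Euc (d : ℕ) := EuclideanSpace ℝ (Fin d)

/-- A sequence in `[0,T]` increasing strictly to `t` from the left. -/
def SeqToLeft (t : ℝ) (s : ℕ → ℝ) : Prop :=
  StrictMono s ∧ (∀ n, 0 ≤ s n ∧ s n < t) ∧ Tendsto s atTop (𝓝 t)

/-- `liminf_{s↑↑t} Γ_s`: the points `x` with `dist(x,Γ_{s_n}) → 0` along every strictly
increasing sequence `s_n → t`. -/
def leftLiminfSV {d : ℕ} (Γ : ℝ → Set (Euc d)) (t : ℝ) : Set (Euc d) :=
  {x | ∀ s : ℕ → ℝ, SeqToLeft t s →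
    Tendsto (fun n => Metric.infDist x (Γ (s n))) atTop (𝓝 0)}

/-- The mapping `⃗Γ` of left limits: `⃗Γ_0 = {0}` and `⃗Γ_t = liminf_{s↑↑t} Γ_s`. -/
def vecSV {d : ℕ} (Γ : ℝ → Set (Euc d)) (t : ℝ) : Set (Euc d) :=
  if t ≤ 0 then {0} else leftLiminfSV Γ t

lemma aux_factor {Ω : Type*} [MeasurableSpace Ω] (E : Set (Ω × ℝ)) (hE : MeasurableSet E) :
    ∃ φ : Ω → (ℕ → Bool), Measurable φ ∧ ∃ E' : Set ((ℕ → Bool) × ℝ), MeasurableSet E' ∧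
      E = (fun p : Ω × ℝ => (φ p.1, p.2)) ⁻¹' E' := by
  have hE2 := hE
  rw [← generateFrom_prod] at hE2
  refine MeasurableSpace.generateFrom_induction _ (fun E _ => 
    ∃ φ : Ω → (ℕ → Bool), Measurable φ ∧ ∃ E' : Set ((ℕ → Bool) × ℝ), MeasurableSet E' ∧
      E = (fun p : Ω × ℝ => (φ p.1, p.2)) ⁻¹' E') ?_ ?_ ?_ ?_ E hE2
  · rintro _ ⟨A, hA, B, hB, rfl⟩ -
    refine ⟨fun ω _ => decide (ω ∈ A), ?_, {c | c 0 = true} ×ˢ B, ?_, ?_⟩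
    · refine measurable_pi_iff.2 fun _ => measurable_to_bool ?_
      have he : (fun x => decide (x ∈ A)) ⁻¹' {true} = A := by ext x; simp
      exact he.symm ▸ hA
    · refine MeasurableSet.prod ?_ hB
      exact (measurable_pi_apply (X := fun _ : ℕ => Bool) 0) (measurableSet_singleton true)
    · ext ⟨a, b⟩; simp
  · exact ⟨fun _ _ => true, measurable_const, ∅, MeasurableSet.empty, by simp⟩
  · rintro t - ⟨φ, hφ, E', hE', rfl⟩
    exact ⟨φ, hφ, E'ᶜ, hE'.compl, by simp⟩
  · intro s _ h
    choose φ hφ E' hE' hs using h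
    refine ⟨fun ω n => φ n.unpair.1 ω n.unpair.2, ?_, 
      ⋃ k, (fun p : (ℕ → Bool) × ℝ => ((fun m => p.1 (Nat.pair k m)), p.2)) ⁻¹' (E' k), ?_, ?_⟩
    · exact measurable_pi_iff.2 fun n => (measurable_pi_apply _).comp (hφ _)
    · refine MeasurableSet.iUnion fun k => ?_
      refine (Measurable.prodMk ?_ measurable_snd) (hE' k)
      exact measurable_pi_iff.2 fun n => (measurable_pi_apply _).comp measurable_fst
    · rw [preimage_iUnion]
      refine iUnion_congr fun k => ?_
      rw [hs k]
      ext ⟨a, b⟩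
      simp

lemma aux_open {N : ℕ → ℕ} {B : ℕ → Set (ℕ → ℕ)}
    (hB : ∀ k, ∀ x ∈ B k, ∀ i < k, x i ≤ N i) {W : Set (ℕ → ℕ)} (hW : IsOpen W)
    (hK : ∀ x : ℕ → ℕ, (∀ i, x i ≤ N i) → x ∈ W) : ∃ k, B k ⊆ W := by
  by_contra! h
  simp only [Set.not_subset] at h
  choose x hx hxW using h
  have hc : IsCompact (Set.pi univ fun i => Iic (N i)) :=
    isCompact_univ_pi fun i => (finite_Iic (N i)).isCompact
  obtain ⟨y, hy, θ, hθ, hlim⟩ := hc.tendsto_subseq (x := fun k i => min (x k i) (N i))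
    (fun k => by intro i _; simp)
  have hlim' : Tendsto (x ∘ θ) atTop (𝓝 y) := by
    rw [tendsto_pi_nhds] at hlim ⊢
    intro i
    refine (hlim i).congr' ?_
    filter_upwards [eventually_gt_atTop i] with k hk
    simp only [Function.comp]
    exact min_eq_left (hB _ _ (hx _) i (hk.trans_le (hθ.id_le k)))
  obtain ⟨k, hk⟩ := (hlim'.eventually (hW.mem_nhds (hK y fun i => hy i trivial))).exists
  exact hxW _ hk

lemma aux_analytic {X : Type*} [TopologicalSpace X] [T2Space X] [MeasurableSpace X] [BorelSpace X]
    (μ : Measure X) [IsFiniteMeasure μ] [μ.OuterRegular] {S : Set X} (hS : AnalyticSet S) :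
    NullMeasurableSet S μ := by
  rw [AnalyticSet] at hS
  rcases hS with rfl | ⟨f, hf, rfl⟩
  · exact MeasurableSet.empty.nullMeasurableSet
  have key : ∀ ε : ENNReal, ε ≠ 0 → ∃ F ⊆ range f, MeasurableSet F ∧ μ (range f) ≤ μ F + ε := by
    intro ε hε
    obtain ⟨δ, hδ, hsum⟩ := ENNReal.exists_pos_sum_of_countable' hε ℕ
    have step : ∀ (k : ℕ) (B : Set (ℕ → ℕ)), ∃ m : ℕ,
        μ (f '' B) ≤ μ (f '' (B ∩ {x | x k ≤ m})) + δ k := by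
      intro k B
      have hmono : Monotone fun m : ℕ => f '' (B ∩ {x | x k ≤ m}) := by
        intro a b hab
        exact image_mono (inter_subset_inter_right _ fun x (hx : x k ≤ a) => hx.trans hab)
      have hU : ⋃ m : ℕ, f '' (B ∩ {x | x k ≤ m}) = f '' B := by
        rw [← image_iUnion, ← inter_iUnion]
        congr 1
        rw [inter_eq_left]
        intro x _
        exact mem_iUnion.2 ⟨x k, le_refl (x k)⟩
      have := tendsto_measure_iUnion_atTop (μ := μ) hmono
      rw [hU] at this
      by_cases h0 : μ (f '' B) = 0
      · exact ⟨0, by simp [h0]⟩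
      have hlt : μ (f '' B) - δ k < μ (f '' B) :=
        ENNReal.sub_lt_self (measure_ne_top _ _) h0 (hδ k).ne'
      obtain ⟨m, hm⟩ := (this.eventually (lt_mem_nhds hlt)).exists
      exact ⟨m, tsub_le_iff_right.1 hm.le⟩
    choose m hm using step
    let B : ℕ → Set (ℕ → ℕ) := fun k => Nat.rec univ (fun k B => B ∩ {x | x k ≤ m k B}) k
    have hBs : ∀ k, B (k + 1) = B k ∩ {x | x k ≤ m k (B k)} := fun k => rfl
    have hB : ∀ k, ∀ x ∈ B k, ∀ i < k, x i ≤ m i (B i) := by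
      intro k
      induction k with
      | zero => intro x _ i hi; omega
      | succ k ih =>
        intro x hx i hi
        rw [hBs] at hx
        rcases Nat.lt_succ_iff_lt_or_eq.1 hi with h | rfl
        · exact ih x hx.1 i h
        · exact hx.2
    have hμ : ∀ k, μ (range f) ≤ μ (f '' B k) + ∑ i ∈ Finset.range k, δ i := by
      intro k
      induction k with
      | zero => simp [B]
      | succ k ih =>
        rw [Finset.sum_range_succ, add_comm (∑ i ∈ Finset.range k, δ i), ← add_assoc]
        exact ih.trans (add_le_add_left (hm k (B k)) _)
    have hc : IsCompact (f '' Set.pi univ fun i => Iic (m i (B i))) :=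
      (isCompact_univ_pi fun i => (finite_Iic _).isCompact).image hf
    refine ⟨_, image_subset_range f (Set.pi univ fun i => Iic (m i (B i))), hc.measurableSet, ?_⟩
    rw [← tsub_le_iff_right, Set.measure_eq_iInf_isOpen (f '' _) μ]
    refine le_iInf₂ fun U hU => le_iInf fun hUo => ?_
    rw [tsub_le_iff_right]
    obtain ⟨k, hk⟩ := aux_open hB (hUo.preimage hf)
      (fun x hx => hU (mem_image_of_mem f fun i _ => hx i))
    exact (hμ k).trans (add_le_add (measure_mono (image_subset_iff.2 hk))
      ((ENNReal.sum_le_tsum _).trans hsum.le))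
  choose! F hFS hFm hF using key
  have hn : ∀ n : ℕ, ((n : ENNReal) + 1)⁻¹ ≠ 0 := fun n => by
    simp
  have hsub : (⋃ n : ℕ, F ((n : ENNReal) + 1)⁻¹) ⊆ range f := iUnion_subset fun n => hFS _ (hn n)
  have hme : MeasurableSet (⋃ n : ℕ, F ((n : ENNReal) + 1)⁻¹) :=
    MeasurableSet.iUnion fun n => hFm _ (hn n)
  refine hme.nullMeasurableSet.congr
    (ae_eq_of_subset_of_measure_ge hsub ?_ hme.nullMeasurableSet (measure_ne_top _ _))
  have hlim : Tendsto (fun n : ℕ => μ (⋃ n : ℕ, F ((n : ENNReal) + 1)⁻¹) + ((n : ENNReal) + 1)⁻¹)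
      atTop (𝓝 (μ (⋃ n : ℕ, F ((n : ENNReal) + 1)⁻¹) + 0)) := by
    refine tendsto_const_nhds.add ?_
    have := (tendsto_add_atTop_iff_nat 1).2 ENNReal.tendsto_inv_nat_nhds_zero
    simpa using this
  rw [add_zero] at hlim
  refine ge_of_tendsto' hlim fun n => (hF _ (hn n)).trans ?_
  gcongr
  exact subset_iUnion (fun n : ℕ => F ((n : ENNReal) + 1)⁻¹) n

lemma aux_proj {Ω : Type*} [MeasurableSpace Ω] (P : Measure Ω) [IsProbabilityMeasure P]
    (hP : P.IsComplete) (E : Set (Ω × ℝ)) (hE : MeasurableSet E) :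
    MeasurableSet {ω | ∃ s, (ω, s) ∈ E} := by
  obtain ⟨φ, hφ, E', hE', rfl⟩ := aux_factor E hE
  have h1 : AnalyticSet (Prod.fst '' E') := hE'.analyticSet_image measurable_fst
  have h2 : NullMeasurableSet (Prod.fst '' E') (P.map φ) := by
    have := Measure.isProbabilityMeasure_map (μ := P) hφ.aemeasurable
    exact aux_analytic _ h1
  have h3 := h2.preimage (hφ.quasiMeasurePreserving P)
  have h4 := h3.measurable_of_complete
  convert h4 using 1
  ext ω
  simp

lemma aux_event {Ω : Type*} [MeasurableSpace Ω] (T : ℝ) (P : Measure Ω) [IsProbabilityMeasure P]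
    (hP : P.IsComplete) (Bad : Set (Ω × ℝ)) (hBad : MeasurableSet Bad) :
    MeasurableSet {p : Ω × ℝ | (0 < p.2 ∧ p.2 ≤ T) ∧ ∀ᶠ s in 𝓝[<] p.2, (p.1, s) ∉ Bad} := by
  have : {p : Ω × ℝ | (0 < p.2 ∧ p.2 ≤ T) ∧ ∀ᶠ s in 𝓝[<] p.2, (p.1, s) ∉ Bad} =
      {p : Ω × ℝ | 0 < p.2 ∧ p.2 ≤ T} ∩ ⋃ q : ℚ, ({p : Ω × ℝ | (q : ℝ) < p.2} ∩ 
        ⋂ r : ℚ, ({p : Ω × ℝ | p.2 ≤ r} ∪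
          Prod.fst ⁻¹' {ω | ∃ s, (ω, s) ∈ Bad ∩ Prod.snd ⁻¹' (Ioo (q : ℝ) r)}ᶜ)) := by
    ext ⟨ω, t⟩
    simp only [mem_ofPred_eq, mem_inter_iff, mem_iUnion, mem_iInter, mem_union, mem_preimage,
      mem_compl_iff, not_exists, not_and, mem_Ioo]
    refine and_congr_right fun _ => ?_
    rw [(nhdsLT_basis t).eventually_iff]
    constructor
    · rintro ⟨a, ha, h⟩
      obtain ⟨q, hq, hqt⟩ := exists_rat_btwn ha
      refine ⟨q, hqt, fun r => ?_⟩
      by_cases hr : t ≤ r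
      · exact Or.inl hr
      · right
        intro s hs h1 h2
        exact h ⟨hq.trans h1, h2.trans (not_le.1 hr)⟩ hs
    · rintro ⟨q, hq, h⟩
      refine ⟨q, hq, fun s hs hb => ?_⟩
      obtain ⟨r, hr, hrt⟩ := exists_rat_btwn hs.2
      rcases h r with h | h
      · exact absurd hrt (not_lt.2 h)
      · exact h s hb hs.1 hr
  rw [this]
  refine MeasurableSet.inter ?_ (MeasurableSet.iUnion fun q => MeasurableSet.inter ?_ 
    (MeasurableSet.iInter fun r => MeasurableSet.union ?_ (measurable_fst ?_)))
  · exact measurable_snd (measurableSet_Ioc (a := (0:ℝ)) (b := T))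
  · exact measurable_snd (measurableSet_Ioi (a := (q:ℝ)))
  · exact measurable_snd (measurableSet_Iic (a := (r:ℝ)))
  · exact (aux_proj P hP _ (hBad.inter (measurable_snd measurableSet_Ioo))).compl

/-- sequential characterisation -/
lemma aux_seq {t : ℝ} (ht : 0 < t) (g : ℝ → ℝ) (hg : ∀ s, 0 ≤ g s) :
    (∀ s : ℕ → ℝ, SeqToLeft t s → Tendsto (fun n => g (s n)) atTop (𝓝 0)) ↔
      ∀ ε > 0, ∀ᶠ s in 𝓝[<] t, g s < ε := by
  constructor
  · intro h ε hε
    by_contra hcon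
    have hf : ∃ᶠ s in 𝓝[<] t, ε ≤ g s := by
      rw [Filter.not_eventually] at hcon
      exact hcon.mono fun s hs => not_lt.1 hs
    have hstep : ∀ a, a < t → ∃ s, a < s ∧ s < t ∧ ε ≤ g s := by
      intro a ha
      obtain ⟨s, hs, h1⟩ := (hf.and_eventually (Ioo_mem_nhdsLT ha)).exists
      exact ⟨s, h1.1, h1.2, hs⟩
    choose! nx h1 h2 h3 using hstep
    have hmax : ∀ n : ℕ, ∀ a, a < t → max a (t - 1 / ((n:ℝ) + 1)) < t := fun n a ha =>
      max_lt ha (sub_lt_self _ (by positivity))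
    let s : ℕ → ℝ := fun n => Nat.rec (nx 0) (fun n a => nx (max a (t - 1 / ((n:ℝ) + 1)))) n
    have hs1 : ∀ n, s (n+1) = nx (max (s n) (t - 1 / ((n:ℝ) + 1))) := fun n => rfl
    have hlt : ∀ n, s n < t := by
      intro n
      induction n with
      | zero => exact h2 0 ht
      | succ n ih => rw [hs1]; exact h2 _ (hmax n _ ih)
    have hmono : StrictMono s := strictMono_nat_of_lt_succ fun n => by
      rw [hs1]
      exact (le_max_left _ _).trans_lt (h1 _ (hmax n _ (hlt n)))
    have hge : ∀ n, ε ≤ g (s n) := by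
      intro n
      cases n with
      | zero => exact h3 0 ht
      | succ n => rw [hs1]; exact h3 _ (hmax n _ (hlt n))
    have hpos : ∀ n, 0 ≤ s n := fun n => (h1 0 ht).le.trans (hmono.monotone (Nat.zero_le n))
    have hlim : Tendsto s atTop (𝓝 t) := by
      rw [← tendsto_add_atTop_iff_nat 1]
      refine tendsto_of_tendsto_of_tendsto_of_le_of_le (g := fun n : ℕ => t - 1 / ((n:ℝ) + 1))
        ?_ tendsto_const_nhds ?_ (fun n => (hlt (n + 1)).le)
      · simpa using (tendsto_const_nhds (x := t)).sub tendsto_one_div_add_atTop_nhds_zero_nat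
      · intro n
        simp only [hs1]
        exact (le_max_right _ _).trans (h1 _ (hmax n _ (hlt n))).le
    have := h s ⟨hmono, fun n => ⟨hpos n, hlt n⟩, hlim⟩
    obtain ⟨n, hn⟩ := (this.eventually (gt_mem_nhds hε)).exists
    exact absurd hn (not_lt.2 (hge n))
  · rintro h s ⟨_, h2, h3⟩
    have hs : Tendsto s atTop (𝓝[<] t) :=
      tendsto_nhdsWithin_iff.2 ⟨h3, Eventually.of_forall fun n => (h2 n).2⟩
    rw [Metric.tendsto_nhds]
    intro ε hε
    filter_upwards [hs.eventually (h ε hε)] with n hn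
    rwa [Real.dist_eq, sub_zero, abs_of_nonneg (hg _)]

lemma aux_compact {d : ℕ} (Γ : ℝ → Set (Euc d)) {t : ℝ} (ht : 0 < t) {K : Set (Euc d)}
    (hK : IsCompact K) {D : Set (Euc d)} (hDK : D ⊆ K) (hD : K ⊆ closure D) :
    (leftLiminfSV Γ t ∩ K).Nonempty ↔
      ∀ n : ℕ, ∃ x ∈ D, ∀ᶠ s in 𝓝[<] t, Metric.infDist x (Γ s) < 1 / ((n:ℝ) + 1) := by
  have hL : ∀ x, x ∈ leftLiminfSV Γ t ↔ ∀ ε > 0, ∀ᶠ s in 𝓝[<] t, Metric.infDist x (Γ s) < ε :=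
    fun x => aux_seq ht (fun s => Metric.infDist x (Γ s)) fun s => Metric.infDist_nonneg
  constructor
  · rintro ⟨x, hx, hxK⟩ n
    have hp : (0:ℝ) < 1 / ((n:ℝ) + 1) := by positivity
    obtain ⟨y, hy, hxy⟩ := Metric.mem_closure_iff.1 (hD hxK) _ (half_pos hp)
    refine ⟨y, hy, ?_⟩
    filter_upwards [(hL x).1 hx _ (half_pos hp)] with s hs
    have := Metric.infDist_le_infDist_add_dist (s := Γ s) (x := y) (y := x)
    rw [dist_comm] at this
    linarith
  · intro h
    choose x hxD hx using h
    obtain ⟨y, hy, θ, hθ, hlim⟩ := hK.tendsto_subseq (fun n => hDK (hxD n))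
    refine ⟨y, (hL y).2 fun ε hε => ?_, hy⟩
    have e1 := (Metric.tendsto_nhds.1 hlim) _ (half_pos hε)
    have e2 := (tendsto_one_div_add_atTop_nhds_zero_nat (𝕜 := ℝ)).comp hθ.tendsto_atTop
    obtain ⟨n, h1, h2⟩ := (e1.and (e2.eventually (gt_mem_nhds (half_pos hε)))).exists
    filter_upwards [hx (θ n)] with s hs
    have := Metric.infDist_le_infDist_add_dist (s := Γ s) (x := y) (y := x (θ n))
    rw [dist_comm] at this
    simp only [Function.comp] at h1 h2
    linarith

/-- **Measurability of the left-limit mapping** (Lemma 7.5, first part): if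
`Γ : Ω × [0,T] ⇒ ℝ^d` is `F ⊗ B([0,T])`-measurable on a complete probability space,
then so is `⃗Γ`. -/
theorem statement13 {Ω : Type*} [mΩ : MeasurableSpace Ω] {d : ℕ} (T : ℝ) (hT : 0 < T)
    (P : Measure Ω) [IsProbabilityMeasure P] (hP : P.IsComplete)
    (Γ : Ω → ℝ → Set (Euc d))
    (hmeas : ∀ O : Set (Euc d), IsOpen O →
      MeasurableSet {p : Ω × ℝ | p.2 ∈ Set.Icc (0:ℝ) T ∧ (Γ p.1 p.2 ∩ O).Nonempty}) :
    ∀ O : Set (Euc d), IsOpen O →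
      MeasurableSet {p : Ω × ℝ | p.2 ∈ Set.Icc (0:ℝ) T ∧
        (vecSV (Γ p.1) p.2 ∩ O).Nonempty} := by
  intro O hO
  -- the bad sets
  have hbad : ∀ (x : Euc d) (ε : ℝ), 0 < ε → MeasurableSet
      {p : Ω × ℝ | p.2 ∈ Set.Icc (0:ℝ) T ∧ ¬ Metric.infDist x (Γ p.1 p.2) < ε} := by
    intro x ε hε
    have : {p : Ω × ℝ | p.2 ∈ Set.Icc (0:ℝ) T ∧ ¬ Metric.infDist x (Γ p.1 p.2) < ε} =
        {p : Ω × ℝ | p.2 ∈ Set.Icc (0:ℝ) T ∧ (Γ p.1 p.2 ∩ univ).Nonempty} \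
        {p : Ω × ℝ | p.2 ∈ Set.Icc (0:ℝ) T ∧ (Γ p.1 p.2 ∩ Metric.ball x ε).Nonempty} := by
      ext p
      simp only [mem_ofPred_eq, Set.mem_sdiff, inter_univ]
      rcases (Γ p.1 p.2).eq_empty_or_nonempty with h | h
      · simp [h, hε]
      · rw [Metric.infDist_lt_iff h]
        have : (∃ y ∈ Γ p.1 p.2, dist x y < ε) ↔ (Γ p.1 p.2 ∩ Metric.ball x ε).Nonempty := by
          simp [Set.Nonempty, dist_comm]
        rw [this]
        tauto
    rw [this]
    exact (hmeas _ isOpen_univ).diff (hmeas _ Metric.isOpen_ball)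
  have hM : ∀ (x : Euc d) (ε : ℝ), 0 < ε → MeasurableSet
      {p : Ω × ℝ | (0 < p.2 ∧ p.2 ≤ T) ∧
        ∀ᶠ s in 𝓝[<] p.2, Metric.infDist x (Γ p.1 s) < ε} := by
    intro x ε hε
    convert aux_event T P hP _ (hbad x ε hε) using 1
    ext ⟨ω, t⟩
    simp only [mem_ofPred_eq]
    refine and_congr_right fun ht => ?_
    refine eventually_congr ?_
    filter_upwards [Ioo_mem_nhdsLT ht.1] with s hs
    have : s ∈ Icc (0:ℝ) T := ⟨hs.1.le, hs.2.le.trans ht.2⟩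
    simp only [this, true_and, not_not]
  have hKm : ∀ K : Set (Euc d), IsCompact K → MeasurableSet
      {p : Ω × ℝ | (0 < p.2 ∧ p.2 ≤ T) ∧ (leftLiminfSV (Γ p.1) p.2 ∩ K).Nonempty} := by
    intro K hK
    obtain ⟨D, hDK, hDc, hD⟩ :=
      (TopologicalSpace.IsSeparable.of_separableSpace K).exists_countable_dense_subset
    have : {p : Ω × ℝ | (0 < p.2 ∧ p.2 ≤ T) ∧ (leftLiminfSV (Γ p.1) p.2 ∩ K).Nonempty} =
        ⋂ n : ℕ, ⋃ x ∈ D, {p : Ω × ℝ | (0 < p.2 ∧ p.2 ≤ T) ∧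
          ∀ᶠ s in 𝓝[<] p.2, Metric.infDist x (Γ p.1 s) < 1 / ((n:ℝ) + 1)} := by
      ext ⟨ω, t⟩
      simp only [mem_ofPred_eq, mem_iInter, mem_iUnion, exists_prop]
      constructor
      · rintro ⟨ht, h⟩ n
        obtain ⟨x, hx, h2⟩ := (aux_compact (Γ ω) ht.1 hK hDK hD).1 h n
        exact ⟨x, hx, ht, h2⟩
      · intro h
        have ht : 0 < t ∧ t ≤ T := by
          obtain ⟨x, hx, ht, _⟩ := h 0
          exact ht
        refine ⟨ht, (aux_compact (Γ ω) ht.1 hK hDK hD).2 fun n => ?_⟩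
        obtain ⟨x, hx, _, h2⟩ := h n
        exact ⟨x, hx, h2⟩
    rw [this]
    exact MeasurableSet.iInter fun n => MeasurableSet.biUnion hDc fun x _ =>
      hM x _ (by positivity)
  obtain ⟨F, hFc, -, hFO, -⟩ := hO.exists_iUnion_isClosed
  have : {p : Ω × ℝ | p.2 ∈ Set.Icc (0:ℝ) T ∧ (vecSV (Γ p.1) p.2 ∩ O).Nonempty} =
      {p : Ω × ℝ | p.2 = 0 ∧ (0 : Euc d) ∈ O} ∪
      ⋃ n : ℕ, ⋃ m : ℕ, {p : Ω × ℝ | (0 < p.2 ∧ p.2 ≤ T) ∧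
        (leftLiminfSV (Γ p.1) p.2 ∩ (F n ∩ Metric.closedBall 0 m)).Nonempty} := by
    ext ⟨ω, t⟩
    simp only [mem_ofPred_eq, mem_union, mem_iUnion, mem_Icc]
    constructor
    · rintro ⟨⟨h0, hT'⟩, x, hx, hxO⟩
      rcases h0.eq_or_lt with rfl | h0
      · left
        simp only [vecSV, le_refl, if_true, mem_singleton_iff] at hx
        exact ⟨rfl, hx ▸ hxO⟩
      · right
        rw [vecSV, if_neg (not_le.2 h0)] at hx
        rw [← hFO] at hxO
        obtain ⟨n, hn⟩ := mem_iUnion.1 hxO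
        obtain ⟨m, hm⟩ := exists_nat_ge (dist x 0)
        exact ⟨n, m, ⟨h0, hT'⟩, x, hx, hn, hm⟩
    · rintro (⟨rfl, h0⟩ | ⟨n, m, ⟨h0, hT'⟩, x, hx, hn, -⟩)
      · refine ⟨⟨le_rfl, hT.le⟩, 0, ?_, h0⟩
        simp [vecSV]
      · refine ⟨⟨h0.le, hT'⟩, x, ?_, ?_⟩
        · rw [vecSV, if_neg (not_le.2 h0)]; exact hx
        · rw [← hFO]; exact mem_iUnion.2 ⟨n, hn⟩
  rw [this]
  refine MeasurableSet.union ?_ (MeasurableSet.iUnion fun n => MeasurableSet.iUnion fun m => hKm _ ?_)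
  · by_cases h : (0 : Euc d) ∈ O
    · simp only [h, and_true]
      exact measurable_snd (measurableSet_singleton (0:ℝ))
    · simp [h]
  · exact (isCompact_closedBall _ _).inter_left (hFc n)
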